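/- Let a, b ≥ 3 be odd integers and let k be such that 2k + 1 = a·b. Then for every integer n, s_k(n) = s_{(a−1)/2}(T_b(n)) · s_{(b−1)/2}(n). -/

import Mathlib

/-!
Put `W_k = S_k + S_{k-1}`, where `S_k` is the rescaled Chebyshev polynomial of the second kind with
integer index, and let `C_k` be the one of the first kind; then `s_k(n) = W_k(n)`, `T_k(n) = C_k(n)`
and `W_{-k-1} = -W_k`. A sequence with `f_{j+2} = t f_{j+1} - f_j` is given by
`f_j = S_j(t) f_0 - S_{j-1}(t) f_{-1}`. For `t = X`, this gives the product formula
`C_b W_c = W_{c+b} + W_{c-b}`, which says that `j ↦ W_{c+jb}` satisfies such a recurrence with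
`t = C_b`; hence `W_{c+jb} = S_j(C_b) W_c - S_{j-1}(C_b) W_{c-b}`. When `b = 2c + 1`, reflection
turns `W_{c-b} = W_{-c-1}` into `-W_c`, and the right-hand side becomes `W_j(C_b) W_c`.
-/

/-- The sequence `s_k(n)`: `s_0 = 1`, `s_1 = n + 1`, `s_{k+2} = n·s_{k+1} − s_k`. -/
def s (n : ℤ) : ℕ → ℤ
  | 0 => 1
  | 1 => n + 1
  | k + 2 => n * s n (k + 1) - s n k

/-- The sequence `r_k(n)`: `r_0 = 1`, `r_1 = n − 1`, `r_{k+2} = n·r_{k+1} − r_k`. -/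
def r (n : ℤ) : ℕ → ℤ
  | 0 => 1
  | 1 => n - 1
  | k + 2 => n * r n (k + 1) - r n k

/-- Dilated Chebyshev polynomials of the first kind: `T_0 = 2`, `T_1 = n`. -/
def T (n : ℤ) : ℕ → ℤ
  | 0 => 2
  | 1 => n
  | k + 2 => n * T n (k + 1) - T n k

/-- Dilated Chebyshev polynomials of the second kind: `U_0 = 1`, `U_1 = n`. -/
def U (n : ℤ) : ℕ → ℤ
  | 0 => 1
  | 1 => n
  | k + 2 => n * U n (k + 1) - U n k

section Polynomials

open Polynomial

/-- The rescaled Chebyshev polynomial of the fourth kind, characterized over `ℝ` by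
`W_k(2 cos θ) = sin ((k + 1/2) θ) / sin (θ / 2)`. It is indexed by `ℤ`, like the polynomials `C` and
`S` of Mathlib, so that `W_{c-b}` makes sense for `b > c`. -/
noncomputable def chebyshevW (R : Type*) [CommRing R] (k : ℤ) : R[X] :=
  Chebyshev.S R k + Chebyshev.S R (k - 1)

variable {R : Type*} [CommRing R]

lemma eq_aeval_chebyshevS_of_recurrence {A : Type*} [CommRing A] [Algebra R A]
    {t : A} {f : ℤ → A} (hf : ∀ j, f (j + 2) = t * f (j + 1) - f j) (j : ℤ) :
    f j = aeval t (Chebyshev.S R j) * f 0 - aeval t (Chebyshev.S R (j - 1)) * f (-1) := by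
  simp only [Chebyshev.aeval_S]
  induction j using Chebyshev.induct with
  | zero => simp
  | one => simpa using hf (-1)
  | add_two j ih₁ ih₀ =>
    have hS := congrArg (eval t) (Chebyshev.S_add_two A j)
    have hS' := congrArg (eval t) (Chebyshev.S_add_one A j)
    simp only [eval_sub, eval_mul, eval_X] at hS hS'
    rw [add_sub_cancel_right] at ih₁
    rw [show (j : ℤ) + 2 - 1 = j + 1 by ring]
    linear_combination hf j + t * ih₁ - ih₀ - f 0 * hS + f (-1) * hS'
  | neg_add_one j ih₀ ih₁ =>
    have hS := congrArg (eval t) (Chebyshev.S_sub_one A (-j))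
    have hS' := congrArg (eval t) (Chebyshev.S_sub_two A (-j))
    simp only [eval_sub, eval_mul, eval_X] at hS hS'
    have hf' := hf (-j - 1)
    rw [show -(j : ℤ) - 1 + 2 = -j + 1 by ring, sub_add_cancel] at hf'
    rw [add_sub_cancel_right] at ih₁
    rw [show -(j : ℤ) - 1 - 1 = -j - 2 by ring]
    linear_combination t * ih₀ - ih₁ + hf' - f 0 * hS + f (-1) * hS'

lemma chebyshevW_zero : chebyshevW R 0 = 1 := by
  simp [chebyshevW]

lemma chebyshevW_one : chebyshevW R 1 = X + 1 := by
  simp [chebyshevW]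

lemma chebyshevW_add_two (k : ℤ) :
    chebyshevW R (k + 2) = X * chebyshevW R (k + 1) - chebyshevW R k := by
  simp only [chebyshevW]
  rw [Chebyshev.S_add_two, show k + 2 - 1 = k + 1 by ring, add_sub_cancel_right]
  linear_combination Chebyshev.S_add_one R k

lemma chebyshevW_neg_sub_one (k : ℤ) : chebyshevW R (-k - 1) = -chebyshevW R k := by
  rw [chebyshevW, chebyshevW, Chebyshev.S_neg_sub_one, show -k - 1 - 1 = -k - 2 by ring,
    Chebyshev.S_neg_sub_two]
  ring

lemma chebyshevC_mul_chebyshevW (m k : ℤ) :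
    Chebyshev.C R m * chebyshevW R k = chebyshevW R (k + m) + chebyshevW R (k - m) := by
  have h_add := eq_aeval_chebyshevS_of_recurrence (R := R) (t := X)
    (f := fun m ↦ chebyshevW R (k + m))
    (fun m ↦ by simpa only [add_assoc] using chebyshevW_add_two (k + m)) m
  have h_sub := eq_aeval_chebyshevS_of_recurrence (R := R) (t := X)
    (f := fun m ↦ chebyshevW R (k - m))
    (fun m ↦ by linear_combination (norm := ring_nf) chebyshevW_add_two (R := R) (k - m - 2)) m
  simp only [aeval_X_left_apply, add_zero, sub_zero, sub_neg_eq_add, ← sub_eq_add_neg]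
    at h_add h_sub
  have h_rec : chebyshevW R (k + 1) + chebyshevW R (k - 1) = X * chebyshevW R k := by
    linear_combination (norm := ring_nf) chebyshevW_add_two (R := R) (k - 1)
  linear_combination chebyshevW R k * Chebyshev.C_eq_S_sub_X_mul_S R m - h_add - h_sub
    + Chebyshev.S R (m - 1) * h_rec

lemma chebyshevW_add_mul (c b j : ℤ) :
    chebyshevW R (c + j * b) = (Chebyshev.S R j).comp (Chebyshev.C R b) * chebyshevW R c
      - (Chebyshev.S R (j - 1)).comp (Chebyshev.C R b) * chebyshevW R (c - b) := by
  have h_rec (j : ℤ) : chebyshevW R (c + (j + 2) * b) =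
      Chebyshev.C R b * chebyshevW R (c + (j + 1) * b) - chebyshevW R (c + j * b) := by
    linear_combination (norm := ring_nf) -chebyshevC_mul_chebyshevW (R := R) b (c + (j + 1) * b)
  simpa [comp_eq_aeval, ← sub_eq_add_neg] using
    eq_aeval_chebyshevS_of_recurrence (R := R) (f := fun j ↦ chebyshevW R (c + j * b)) h_rec j

lemma chebyshevW_add_mul_two_mul_add_one (c j : ℤ) :
    chebyshevW R (c + j * (2 * c + 1)) =
      (chebyshevW R j).comp (Chebyshev.C R (2 * c + 1)) * chebyshevW R c := by
  rw [chebyshevW_add_mul, show c - (2 * c + 1) = -c - 1 by ring, chebyshevW_neg_sub_one,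
    show chebyshevW R j = Chebyshev.S R j + Chebyshev.S R (j - 1) from rfl, add_comp]
  ring

end Polynomials

lemma s_eq_eval_chebyshevW (n : ℤ) (k : ℕ) : s n k = (chebyshevW ℤ k).eval n := by
  induction k using Nat.twoStepInduction with
  | zero => simp [s, chebyshevW_zero]
  | one => simp [s, chebyshevW_one]
  | more k ih₀ ih₁ => simp [s, ih₀, ih₁, chebyshevW_add_two]

lemma T_eq_eval_chebyshevC (n : ℤ) (k : ℕ) : T n k = (Polynomial.Chebyshev.C ℤ k).eval n := by
  induction k using Nat.twoStepInduction with
  | zero => simp [T]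
  | one => simp [T]
  | more k ih₀ ih₁ => simp [T, ih₀, ih₁]

theorem s_factorization_composite_index (a b : ℕ) (ha : Odd a) (hb : Odd b)
    (ha3 : 3 ≤ a) (hb3 : 3 ≤ b) (k : ℕ) (hk : 2 * k + 1 = a * b) (n : ℤ) :
    s n k = s (T n b) ((a - 1) / 2) * s n ((b - 1) / 2) := by
  obtain ⟨j, rfl⟩ := ha
  obtain ⟨c, rfl⟩ := hb
  have hk' : (k : ℤ) = c + j * (2 * c + 1) := by
    zify at hk
    linarith
  have hj : (2 * j + 1 - 1) / 2 = j := by omega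
  have hc : (2 * c + 1 - 1) / 2 = c := by omega
  rw [hj, hc]
  simp [s_eq_eval_chebyshevW, T_eq_eval_chebyshevC, hk', chebyshevW_add_mul_two_mul_add_one,
    Polynomial.eval_comp]
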